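/- Let q = p² (i.e., e = 2) and let f : F_q → F_p belong to the class RF with sign ε satisfying ε η_0(−1) = −1. Then C_f has length p², dimension 4 and minimum distance p² − p − 1, its weight enumerator is 1 + p²(p−1)² z^{p²−p−1} + p(p²−1) z^{p²−p} + p²(p−1) z^{p²−1} + (p−1) z^{p²}, and the dual code C_f^⊥ has length p², dimension p² − 4 and minimum distance 4. Moreover, the supports of the codewords of weight p² − p − 1 in C_f form a 2-(p², p² − p − 1, (p−2)(p² − p − 1)) design, the complements of these supports form a 2-(p², p + 1, p) design, and the supports of the codewords of weight 4 in C_f^⊥ form a 2-(p², 4, (p² − 3)(p − 2)/2) design. -/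

import Mathlib

open scoped Classical

noncomputable section

/-- The complex primitive `p`-th root of unity `ζ_p = exp(2πi/p)`. -/
def zetapc (p : ℕ) : ℂ := Complex.exp (2 * Real.pi * Complex.I / p)

/-- `√p* = i^{((p-1)/2)²} √p`, a square root of `p* = (-1)^{(p-1)/2} p`. -/
def sqrtpstar (p : ℕ) : ℂ := Complex.I ^ (((p - 1) / 2) ^ 2) * (Real.sqrt p : ℂ)

/-- The quadratic character of a finite field: `1` on nonzero squares, `-1` on
nonsquares, `0` at `0`. -/
def qchar (F : Type*) [MonoidWithZero F] : F → ℤ :=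
  fun y => if y = 0 then 0 else if IsSquare y then 1 else -1

/-- `f : F_q → F_p` belongs to the class `RF` of weakly regular bent functions,
with sign `ε` and dual `fstar`. -/
structure IsRF (p e : ℕ) (Fq : Type*) [Field Fq] [Fintype Fq] [Algebra (ZMod p) Fq]
    (f : Fq → ZMod p) (ε : ℤ) (fstar : Fq → ZMod p) : Prop where
  sign : ε = 1 ∨ ε = -1
  map_zero : f 0 = 0
  hom : ∃ h : ℕ, Even h ∧ 0 < h ∧ Nat.gcd (h - 1) (p - 1) = 1 ∧
    ∀ a : ZMod p, a ≠ 0 → ∀ x : Fq,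
      f (algebraMap (ZMod p) Fq a * x) = a ^ h * f x
  walsh : ∀ β : Fq,
    (∑ x : Fq, zetapc p ^ (f x - Algebra.trace (ZMod p) Fq (β * x)).val)
      = (ε : ℂ) * sqrtpstar p ^ e * zetapc p ^ (fstar β).val

/-- The code `C_f` attached to `f`. -/
def rfCode (p : ℕ) (Fq : Type*) [Field Fq] [Fintype Fq] [Algebra (ZMod p) Fq]
    (f : Fq → ZMod p) : Set (Fq → ZMod p) :=
  {w | ∃ a c : ZMod p, ∃ b : Fq, ∀ x : Fq,
    w x = a * f x + Algebra.trace (ZMod p) Fq (b * x) + c}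

/-- The dual code under the standard inner product. -/
def dualCode {ι F : Type*} [Fintype ι] [CommRing F] (C : Set (ι → F)) : Set (ι → F) :=
  {u | ∀ v ∈ C, ∑ i, u i * v i = 0}

/-- `d` is the minimum distance of the code `C`: the smallest Hamming weight of a
nonzero codeword. -/
def IsMinDist {ι F : Type*} [Fintype ι] [CommRing F] (C : Set (ι → F)) (d : ℕ) : Prop :=
  (∃ c ∈ C, c ≠ 0 ∧ hammingNorm c = d) ∧ ∀ c ∈ C, c ≠ 0 → d ≤ hammingNorm c

/-- The supports of the codewords of `C` of Hamming weight `κ` form a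
`2-(n, κ, lam)` design. -/
def Holds2Design {ι F : Type*} [Fintype ι] [CommRing F] (C : Set (ι → F))
    (κ lam : ℕ) : Prop :=
  ∀ i j : ι, i ≠ j →
    Nat.card {S : Set ι //
      (∃ c ∈ C, hammingNorm c = κ ∧ S = {k | c k ≠ 0}) ∧ i ∈ S ∧ j ∈ S} = lam

/-- The complements of the supports of the codewords of `C` of Hamming weight `κ`
form a 2-design with `lam` blocks through every pair of points. -/
def Holds2DesignCompl {ι F : Type*} [Fintype ι] [CommRing F] (C : Set (ι → F))
    (κ lam : ℕ) : Prop :=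
  ∀ i j : ι, i ≠ j →
    Nat.card {S : Set ι //
      (∃ c ∈ C, hammingNorm c = κ ∧ S = {k | c k = 0}) ∧ i ∈ S ∧ j ∈ S} = lam

/-!
Since `ε (√p*)² = ε η₀(-1) p = -p`, the Walsh transform of `f` at `β` is `-p ζ ^ f*(β)`. The only
`ℚ`-linear relation between the `p`-th roots of unity is that their sum vanishes, so the values of
`f - Tr(β ·)` are forced to be distributed as on an ovoid of `PG(3, p)`: the value `f*(β)` is taken
once and every other value `p + 1` times. The zero sets of the words of `C_f` are then the plane
sections of an ovoid, which gives the weights.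

Fix two points `i ≠ j`. The words of `C_f` vanishing at both form a plane of `p²` words whose zeros
can be counted; by averaging, `i` and `j` are their only common zeros. Hence the coordinates of any
three points are independent on `C_f`, and the dual distance is at least `4`. A word of minimum
weight of `C_f` is determined up to a scalar by its support, so the designs of `C_f` are
obtained by counting words. Four points support a word of the dual exactly when they lie in the
zero set of a nonzero word of `C_f`, again unique up to a scalar; summing `(z - 2).choose 2` over
the nonzero words vanishing at `i` and `j`, where `z` is the number of zeros, counts the blocks of
the dual design through `i` and `j`.
-/

namespace OvoidalCode

open Finset hiding card
open Module
open Fintype (card)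

section Counting

variable {α M : Type*} [AddCommMonoid M]

lemma sum_eq_add_nsmul_of_eq_off {s : Finset α} {a : α} (ha : a ∈ s) {F : α → M} {m : M}
    (hF : ∀ b ∈ s, b ≠ a → F b = m) : ∑ b ∈ s, F b = F a + (#s - 1) • m := by
  rw [← add_sum_erase s F ha, ← card_erase_of_mem ha, sum_eq_card_nsmul]
  exact fun b hb ↦ hF b (mem_of_mem_erase hb) (ne_of_mem_erase hb)

lemma sum_univ_eq_add_nsmul_of_eq_off [Fintype α] (a : α) {F : α → M} {m : M}
    (hF : ∀ b, b ≠ a → F b = m) : ∑ b, F b = F a + (card α - 1) • m :=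
  sum_eq_add_nsmul_of_eq_off (mem_univ a) fun b _ ↦ hF b

lemma card_filter_subset_powersetCard {A Z : Finset α} (hAZ : A ⊆ Z) {k : ℕ} (hk : #A ≤ k) :
    #{S ∈ Z.powersetCard k | A ⊆ S} = (#Z - #A).choose (k - #A) := by
  rw [← card_sdiff_of_subset hAZ, ← card_powersetCard]
  refine card_nbij' (· \ A) (· ∪ A) ?_ ?_ ?_ ?_
  · intro S hS
    simp only [coe_filter, mem_powersetCard, Set.mem_ofPred_eq] at hS
    simp only [mem_coe, mem_powersetCard]
    exact ⟨sdiff_subset_sdiff hS.1.1 le_rfl, by rw [card_sdiff_of_subset hS.2, hS.1.2]⟩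
  · intro S hS
    simp only [mem_coe, mem_powersetCard, subset_sdiff] at hS
    simp only [coe_filter, mem_powersetCard, Set.mem_ofPred_eq]
    refine ⟨⟨union_subset hS.1.1 hAZ, ?_⟩, subset_union_right⟩
    rw [card_union_of_disjoint hS.1.2]
    omega
  · intro S hS
    simp only [coe_filter, Set.mem_ofPred_eq] at hS
    exact sdiff_union_of_subset hS.2
  · intro S hS
    simp only [mem_coe, mem_powersetCard, subset_sdiff] at hS
    exact union_sdiff_cancel_right hS.1.2

lemma card_filter_not_and_not (s : Finset α) (P Q : α → Prop)
    [DecidablePred P] [DecidablePred Q] :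
    #{a ∈ s | ¬ P a ∧ ¬ Q a} + #{a ∈ s | P a} + #{a ∈ s | Q a} = #s + #{a ∈ s | P a ∧ Q a} := by
  have h := card_union_add_card_inter {a ∈ s | P a} {a ∈ s | Q a}
  have h' := card_filter_add_card_filter_not (s := s) (fun a ↦ P a ∨ Q a)
  rw [← filter_or, ← filter_and] at h
  simp only [not_or] at h'
  omega

lemma card_filter_mem_mul_of_pair {ι : Type*} [Fintype ι] {s : Finset α} {B : α → Finset ι}
    {k lam : ℕ} (hk : ∀ a ∈ s, #(B a) = k)
    (hlam : ∀ i j, i ≠ j → #{a ∈ s | i ∈ B a ∧ j ∈ B a} = lam) (i : ι) :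
    #{a ∈ s | i ∈ B a} * (k - 1) = (card ι - 1) * lam := by
  have h := sum_card_bipartiteAbove_eq_sum_card_bipartiteBelow (s := {a ∈ s | i ∈ B a})
    (t := univ.erase i) (fun a j ↦ j ∈ B a)
  have above : ∀ a ∈ ({a ∈ s | i ∈ B a} : Finset α),
      #(bipartiteAbove (fun a j ↦ j ∈ B a) (univ.erase i) a) = k - 1 := by
    intro a ha
    rw [mem_filter] at ha
    rw [← hk a ha.1, ← card_erase_of_mem ha.2]
    congr 1
    ext j
    simp [bipartiteAbove, and_comm]
  have below : ∀ j ∈ univ.erase i,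
      #(bipartiteBelow (fun a j ↦ j ∈ B a) {a ∈ s | i ∈ B a} j) = lam := by
    intro j hj
    rw [← hlam i j (ne_of_mem_erase hj).symm, bipartiteBelow, filter_filter]
  rwa [sum_const_nat above, sum_const_nat below, card_erase_of_mem (mem_univ i), card_univ] at h

end Counting

section LinearForms

variable {K V : Type*} [Field K] [AddCommGroup V] [Fintype V] [Module K V]

lemma card_filter_apply_eq_mul_card [Fintype K] {L : Dual K V} (hL : L ≠ 0) (t : K) :
    #{x | L x = t} * card K = card V := by
  have hsurj : Function.Surjective L := LinearMap.surjective hL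
  have fibre : ∀ s ∈ (univ : Finset K), #{x | L x = s} = #{x | L x = t} := fun s _ ↦
    AddMonoidHom.card_fiber_eq_of_mem_range L.toAddMonoidHom (hsurj s) (hsurj t)
  have h := card_eq_sum_card_fiberwise (s := (univ : Finset V)) (t := univ) (f := L)
    (by simp)
  rw [sum_const_nat fibre, card_univ, card_univ] at h
  rw [h, mul_comm]

lemma card_filter_apply_eq_pow [Fintype K] {n : ℕ} (hV : card V = card K ^ (n + 1)) {L : Dual K V}
    (hL : L ≠ 0) (t : K) : #{x | L x = t} = card K ^ n := by
  have h := card_filter_apply_eq_mul_card hL t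
  rw [hV, pow_succ] at h
  exact Nat.eq_of_mul_eq_mul_right Fintype.card_pos h

lemma natCard_dual [Finite K] : Nat.card (Dual K V) = card V := by
  have := Module.Finite.of_finite (R := K) (M := V)
  rw [Module.natCard_eq_pow_finrank (K := K), Subspace.dual_finrank_eq,
    ← Module.natCard_eq_pow_finrank, Nat.card_eq_fintype_card]

lemma card_filter_mem_ne_zero_of_finrank_eq_one [Fintype K] {D : Submodule K V}
    (hD : finrank K D = 1) :
    #{v | v ∈ D ∧ v ≠ 0} = card K - 1 := by
  have hcard : #{v | v ∈ D} = card K := by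
    rw [← Fintype.card_subtype, ← Nat.card_eq_fintype_card,
      Module.natCard_eq_pow_finrank (K := K) (V := D), hD, pow_one, Nat.card_eq_fintype_card]
  rw [← hcard, ← card_erase_of_mem (mem_filter.2 ⟨mem_univ _, D.zero_mem⟩)]
  congr 1
  ext v
  simp [and_comm]

end LinearForms

section Codes

variable {ι K : Type*} [Fintype ι] [Field K]

/-- The set of coordinates where a word vanishes, the complement of its support. -/
def zeros (w : ι → K) : Finset ι := {x | w x = 0}

@[simp]
lemma mem_zeros {w : ι → K} {x : ι} : x ∈ zeros w ↔ w x = 0 := by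
  simp [zeros]

lemma hammingNorm_add_card_zeros [DecidableEq K] (w : ι → K) :
    hammingNorm w + #(zeros w) = card ι := by
  rw [hammingNorm, zeros, add_comm, ← card_univ]
  convert card_filter_add_card_filter_not (s := univ) fun x ↦ w x = 0

lemma hammingNorm_eq_card_sub [DecidableEq K] (w : ι → K) :
    hammingNorm w = card ι - #(zeros w) :=
  Nat.eq_sub_of_add_eq (hammingNorm_add_card_zeros w)

lemma card_compl_zeros [DecidableEq K] (w : ι → K) : #(zeros w)ᶜ = hammingNorm w := by
  have := hammingNorm_add_card_zeros w
  have := card_add_card_compl (zeros w)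
  omega

/-- The supports of the words of weight `κ` of a code: the blocks of the design it may hold. -/
def supports (C : Set (ι → K)) (κ : ℕ) : Finset (Finset ι) :=
  {S | ∃ c ∈ C, hammingNorm c = κ ∧ (zeros c)ᶜ = S}

lemma mem_supports {C : Set (ι → K)} {κ : ℕ} {S : Finset ι} :
    S ∈ supports C κ ↔ ∃ c ∈ C, hammingNorm c = κ ∧ (zeros c)ᶜ = S := by
  simp [supports]

lemma card_of_mem_supports {C : Set (ι → K)} {κ : ℕ} {S : Finset ι} (hS : S ∈ supports C κ) :
    #S = κ := by
  obtain ⟨c, -, hκ, rfl⟩ := mem_supports.1 hS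
  rw [card_compl_zeros, hκ]

lemma natCard_subtype_eq_card_of_injective {α β : Type*} {P : β → Prop} {s : Finset α} {g : α → β}
    (hg : g.Injective) (hP : ∀ b, P b ↔ ∃ a ∈ s, g a = b) : Nat.card {b // P b} = #s := by
  have himage : {b | P b} = g '' s := Set.ext hP
  rw [← Set.coe_ofPred, himage, Nat.card_image_of_injective hg, Nat.card_eq_card_toFinset,
    toFinset_coe]

lemma holds2Design_iff {C : Set (ι → K)} {κ lam : ℕ} :
    Holds2Design C κ lam ↔ ∀ i j, i ≠ j → #{S ∈ supports C κ | i ∈ S ∧ j ∈ S} = lam := by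
  refine forall₃_congr fun i j _ ↦ ?_
  rw [natCard_subtype_eq_card_of_injective coe_injective fun b ↦ ?_]
  simp only [mem_filter, mem_supports]
  constructor
  · rintro ⟨⟨c, hc, hκ, rfl⟩, hi, hj⟩
    exact ⟨(zeros c)ᶜ, ⟨⟨c, hc, hκ, rfl⟩, by simpa using hi, by simpa using hj⟩, by ext; simp⟩
  · rintro ⟨S, ⟨⟨c, hc, hκ, rfl⟩, hi, hj⟩, rfl⟩
    exact ⟨⟨c, hc, hκ, by ext; simp⟩, hi, hj⟩

lemma holds2DesignCompl_iff {C : Set (ι → K)} {κ lam : ℕ} :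
    Holds2DesignCompl C κ lam ↔
      ∀ i j, i ≠ j → #{S ∈ supports C κ | i ∉ S ∧ j ∉ S} = lam := by
  refine forall₃_congr fun i j _ ↦ ?_
  rw [natCard_subtype_eq_card_of_injective (coe_injective.comp compl_injective) fun b ↦ ?_]
  simp only [mem_filter, mem_supports]
  constructor
  · rintro ⟨⟨c, hc, hκ, rfl⟩, hi, hj⟩
    exact ⟨(zeros c)ᶜ, ⟨⟨c, hc, hκ, rfl⟩, by simpa using hi, by simpa using hj⟩, by ext; simp⟩
  · rintro ⟨S, ⟨⟨c, hc, hκ, rfl⟩, hi, hj⟩, rfl⟩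
    exact ⟨⟨c, hc, hκ, by ext; simp⟩, by simpa using hi, by simpa using hj⟩

/-- The restriction of words to the coordinate set `T`; the image of a code is the code
punctured outside `T`. -/
def restrictTo (K : Type*) [Field K] (T : Finset ι) : (ι → K) →ₗ[K] (T → K) :=
  LinearMap.funLeft K K (↑)

@[simp]
lemma restrictTo_apply {ι : Type*} (T : Finset ι) (w : ι → K) (x : T) :
    restrictTo K T w x = w x := rfl

/-- The subcode of the words of `C` vanishing on the coordinate set `T`. -/
def shortened (C : Submodule K (ι → K)) (T : Finset ι) : Submodule K (ι → K) :=
  C ⊓ LinearMap.ker (restrictTo K T)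

lemma mem_shortened {C : Submodule K (ι → K)} {T : Finset ι} {w : ι → K} :
    w ∈ shortened C T ↔ w ∈ C ∧ T ⊆ zeros w := by
  simp [shortened, funext_iff, subset_iff]

lemma shortened_anti {ι : Type*} (C : Submodule K (ι → K)) {S T : Finset ι} (h : S ⊆ T) :
    shortened C T ≤ shortened C S :=
  inf_le_inf_left C fun _ hw ↦ funext fun x ↦ congrFun hw ⟨x, h x.2⟩

lemma finrank_map_restrictTo_add_finrank_shortened {ι : Type*} [Finite ι]
    (C : Submodule K (ι → K)) (T : Finset ι) :
    finrank K (C.map (restrictTo K T)) + finrank K (shortened C T) = finrank K C := by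
  rw [← LinearMap.finrank_range_add_finrank_ker ((restrictTo K T).domRestrict C),
    LinearMap.range_domRestrict, LinearMap.ker_domRestrict, shortened,
    ← Submodule.map_comap_subtype, Submodule.finrank_map_subtype_eq]

lemma sum_mul_eq_restrictTo_dotProduct {u : ι → K} {T : Finset ι} (hu : (zeros u)ᶜ ⊆ T)
    (w : ι → K) : ∑ x, u x * w x = restrictTo K T u ⬝ᵥ restrictTo K T w := by
  rw [← sum_subset (subset_univ T), ← sum_coe_sort T]
  · rfl
  · intro x _ hx
    have hux : u x = 0 := by simpa using fun h ↦ hx (hu (mem_compl.2 h))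
    rw [hux, zero_mul]

lemma map_restrictTo_eq_top_iff {C : Submodule K (ι → K)} {T : Finset ι} :
    C.map (restrictTo K T) = ⊤ ↔
      ∀ u ∈ dualCode (C : Set (ι → K)), (zeros u)ᶜ ⊆ T → u = 0 := by
  constructor
  · intro htop u hu huT
    have hzero : restrictTo K T u = 0 := dotProduct_eq_zero _ fun y ↦ by
      obtain ⟨w, hw, rfl⟩ := htop.ge (Submodule.mem_top (x := y))
      rw [← sum_mul_eq_restrictTo_dotProduct huT, hu w hw]
    funext x
    by_cases hx : x ∈ T
    · exact congrFun hzero ⟨x, hx⟩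
    · simpa using fun h ↦ hx (huT (mem_compl.2 h))
  · intro hdual
    by_contra htop
    obtain ⟨φ, hφ, hker⟩ := Submodule.exists_le_ker_of_lt_top _ (lt_top_iff_ne_top.2 htop)
    obtain ⟨a, rfl⟩ := (dotProductEquiv K T).surjective φ
    set u : ι → K := fun x ↦ if hx : x ∈ T then a ⟨x, hx⟩ else 0 with hu
    have huT : (zeros u)ᶜ ⊆ T := fun x hx ↦ by
      by_contra h
      simp [hu, h] at hx
    have hua : restrictTo K T u = a := by
      funext x
      simp [hu]
    have hu0 : u = 0 := hdual u (fun w hw ↦ by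
      rw [sum_mul_eq_restrictTo_dotProduct huT, hua]
      exact hker (Submodule.mem_map_of_mem hw)) huT
    exact hφ (by rw [← hua, hu0, map_zero, map_zero])

lemma natCard_dualCode (C : Submodule K (ι → K)) :
    Nat.card (dualCode (C : Set (ι → K))) = Nat.card K ^ (card ι - finrank K C) := by
  have hmem : dualCode (C : Set (ι → K)) =
      (C.dualAnnihilator.comap (dotProductEquiv K ι).toLinearMap : Submodule K (ι → K)) := by
    ext u
    simp [dualCode, dotProduct, Submodule.mem_dualAnnihilator]
  have hrank := Subspace.finrank_add_finrank_dualAnnihilator_eq C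
  rw [finrank_fintype_fun_eq_card] at hrank
  rw [hmem, SetLike.coe_sort_coe, Module.natCard_eq_pow_finrank (K := K),
    Submodule.comap_equiv_eq_map_symm, LinearEquiv.finrank_map_eq, ← hrank, Nat.add_sub_cancel_left]

lemma lt_hammingNorm_of_mem_dualCode {C : Submodule K (ι → K)} {t : ℕ} (ht : t < card ι)
    (hsep : ∀ T k, #T = t → k ∉ T → ∃ w ∈ shortened C T, w k ≠ 0)
    {u : ι → K} (hu : u ∈ dualCode (C : Set (ι → K))) (hne : u ≠ 0) : t + 1 < hammingNorm u := by
  obtain ⟨k, hk⟩ := Function.ne_iff.1 hne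
  by_contra! hle
  have hksupp : k ∈ (zeros u)ᶜ := by simpa using hk
  have hcard : #((zeros u)ᶜ.erase k) ≤ t := by
    have := card_compl_zeros u
    have := card_erase_add_one hksupp
    omega
  obtain ⟨T, hT, hkT, hTt⟩ := exists_subsuperset_card_eq
    (erase_subset_erase k (subset_univ (zeros u)ᶜ)) hcard (by
      rw [card_erase_of_mem (mem_univ k), card_univ]; omega)
  obtain ⟨w, hw, hwk⟩ := hsep T k hTt fun h ↦ by simpa using hkT h
  rw [mem_shortened] at hw
  have hsum : ∑ x, u x * w x = u k * w k := sum_eq_single k (fun x _ hxk ↦ by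
    by_cases hx : u x = 0
    · rw [hx, zero_mul]
    · rw [mem_zeros.1 (hw.2 (hT (by simp [hx, hxk]))), mul_zero]) (by simp)
  exact mul_ne_zero hk hwk (hsum ▸ hu w hw.1)

section DualDistance

variable {C : Submodule K (ι → K)} {t : ℕ}

lemma finrank_shortened_add_card
    (hdual : ∀ u ∈ dualCode (C : Set (ι → K)), u ≠ 0 → t < hammingNorm u)
    {T : Finset ι} (hT : #T = t) : finrank K (shortened C T) + t = finrank K C := by
  have htop : C.map (restrictTo K T) = ⊤ := map_restrictTo_eq_top_iff.2 fun u hu huT ↦ by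
    by_contra hne
    have := card_le_card huT
    have := hdual u hu hne
    have := card_compl_zeros u
    omega
  rw [← finrank_map_restrictTo_add_finrank_shortened C T, htop, finrank_top,
    finrank_fintype_fun_eq_card, Fintype.card_coe, hT, add_comm]

lemma mem_supports_dualCode_iff
    (hdual : ∀ u ∈ dualCode (C : Set (ι → K)), u ≠ 0 → t < hammingNorm u)
    (hC : finrank K C = t + 1) {S : Finset ι} (hS : #S = t + 1) :
    S ∈ supports (dualCode (C : Set (ι → K))) (t + 1) ↔ shortened C S ≠ ⊥ := by
  have hrank := finrank_map_restrictTo_add_finrank_shortened C S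
  have hbot : shortened C S = ⊥ ↔ C.map (restrictTo K S) = ⊤ := by
    rw [← Submodule.finrank_eq_zero]
    have hfun : finrank K (S → K) = t + 1 := by
      rw [finrank_fintype_fun_eq_card, Fintype.card_coe, hS]
    refine ⟨fun h ↦ Submodule.eq_top_of_finrank_eq (by omega), fun h ↦ ?_⟩
    rw [h, finrank_top] at hrank
    omega
  rw [Ne, hbot, map_restrictTo_eq_top_iff, mem_supports]
  push Not
  constructor
  · rintro ⟨u, hu, hweight, rfl⟩
    exact ⟨u, hu, Subset.rfl, fun h ↦ by simp [h] at hweight⟩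
  · rintro ⟨u, hu, huS, hne⟩
    have hlt := hdual u hu hne
    have hle := card_le_card huS
    have hsupp := card_compl_zeros u
    exact ⟨u, hu, by omega, eq_of_subset_of_card_le huS (by omega)⟩

lemma finrank_shortened_eq_one
    (hdual : ∀ u ∈ dualCode (C : Set (ι → K)), u ≠ 0 → t < hammingNorm u)
    (hC : finrank K C = t + 1) {S : Finset ι}
    (hS : S ∈ supports (dualCode (C : Set (ι → K))) (t + 1)) :
    finrank K (shortened C S) = 1 := by
  have hcard := card_of_mem_supports hS
  obtain ⟨T, hTS, hT⟩ := exists_subset_card_eq (show t ≤ #S by omega)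
  have hle := Submodule.finrank_mono (shortened_anti C hTS)
  have hTrank := finrank_shortened_add_card hdual hT
  have hne := mt Submodule.finrank_eq_zero.1 ((mem_supports_dualCode_iff hdual hC hcard).1 hS)
  omega

lemma card_supports_dualCode_subset_zeros
    (hdual : ∀ u ∈ dualCode (C : Set (ι → K)), u ≠ 0 → t < hammingNorm u)
    (hC : finrank K C = t + 1) {A : Finset ι} (hA : #A ≤ t + 1) {w : ι → K}
    (hw : w ∈ shortened C A) (hne : w ≠ 0) :
    #{S ∈ {S ∈ supports (dualCode (C : Set (ι → K))) (t + 1) | A ⊆ S} | S ⊆ zeros w} =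
      (#(zeros w) - #A).choose (t + 1 - #A) := by
  rw [mem_shortened] at hw
  have hsupp : ∀ S, #S = t + 1 → S ⊆ zeros w →
      S ∈ supports (dualCode (C : Set (ι → K))) (t + 1) := fun S hS hSw ↦
    (mem_supports_dualCode_iff hdual hC hS).2
      ((Submodule.ne_bot_iff _).2 ⟨w, mem_shortened.2 ⟨hw.1, hSw⟩, hne⟩)
  rw [← card_filter_subset_powersetCard hw.2 hA, filter_filter]
  congr 1
  ext S
  simp only [mem_filter, mem_powersetCard]
  constructor
  · rintro ⟨hS, hAS, hSw⟩
    exact ⟨⟨hSw, card_of_mem_supports hS⟩, hAS⟩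
  · rintro ⟨⟨hSw, hS⟩, hAS⟩
    exact ⟨hsupp S hS hSw, hAS, hSw⟩

variable [Fintype K]

lemma sum_choose_card_zeros
    (hdual : ∀ u ∈ dualCode (C : Set (ι → K)), u ≠ 0 → t < hammingNorm u)
    (hC : finrank K C = t + 1) {A : Finset ι} (hA : #A ≤ t + 1) :
    ∑ w with w ∈ shortened C A ∧ w ≠ 0, (#(zeros w) - #A).choose (t + 1 - #A) =
      #{S ∈ supports (dualCode (C : Set (ι → K))) (t + 1) | A ⊆ S} * (card K - 1) := by
  set W : Finset (ι → K) := {w | w ∈ shortened C A ∧ w ≠ 0}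
  set 𝒮 := {S ∈ supports (dualCode (C : Set (ι → K))) (t + 1) | A ⊆ S}
  have above : ∀ w ∈ W, #(bipartiteAbove (fun w S ↦ S ⊆ zeros w) 𝒮 w) =
      (#(zeros w) - #A).choose (t + 1 - #A) := by
    intro w hw
    rw [mem_filter_univ] at hw
    exact card_supports_dualCode_subset_zeros hdual hC hA hw.1 hw.2
  have below : ∀ S ∈ 𝒮, #(bipartiteBelow (fun w S ↦ S ⊆ zeros w) W S) = card K - 1 := by
    intro S hS
    rw [mem_filter] at hS
    rw [← card_filter_mem_ne_zero_of_finrank_eq_one (finrank_shortened_eq_one hdual hC hS.1),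
      bipartiteBelow, filter_filter]
    congr 1
    ext w
    simp only [mem_filter_univ, mem_shortened]
    constructor
    · rintro ⟨⟨⟨hw, -⟩, hne⟩, hSw⟩
      exact ⟨⟨hw, hSw⟩, hne⟩
    · rintro ⟨⟨hw, hSw⟩, hne⟩
      exact ⟨⟨⟨hw, hS.2.trans hSw⟩, hne⟩, hSw⟩
  rw [← sum_congr rfl above, sum_card_bipartiteAbove_eq_sum_card_bipartiteBelow,
    sum_const_nat below]

end DualDistance

lemma card_mul_card_filter_mem_and_apply_eq_zero [Fintype K] (W : Submodule K (ι → K)) (x : ι) :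
    card K * #{w | w ∈ W ∧ w x = 0} =
      #{w | w ∈ W} * if ∀ w ∈ W, w x = 0 then card K else 1 := by
  split_ifs with hx
  · rw [mul_comm]
    congr 2
    ext w
    simpa using hx w
  · have hL : (LinearMap.proj x : (ι → K) →ₗ[K] K).domRestrict W ≠ 0 := fun h ↦
      hx fun w hw ↦ LinearMap.congr_fun h ⟨w, hw⟩
    have hfibre := card_filter_apply_eq_mul_card hL 0
    have hsub : ({w : W | (LinearMap.proj x : (ι → K) →ₗ[K] K).domRestrict W w = 0} : Finset W) =
        ({w | w x = 0} : Finset (ι → K)).subtype (· ∈ W) := by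
      ext w
      rw [mem_filter, mem_subtype, mem_filter]
      simp
    rw [hsub, card_subtype, filter_filter, Fintype.card_subtype] at hfibre
    rw [mul_one, mul_comm, ← hfibre]
    simp only [and_comm]

lemma sum_card_zeros [Fintype K] (W : Submodule K (ι → K)) :
    card K * ∑ w with w ∈ W, #(zeros w) =
      #{w | w ∈ W} * (card ι + (card K - 1) * #{x | ∀ w ∈ W, w x = 0}) := by
  have hswap := sum_card_bipartiteAbove_eq_sum_card_bipartiteBelow
    (s := ({w | w ∈ W} : Finset (ι → K))) (t := univ) (fun w x ↦ w x = 0)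
  simp only [bipartiteAbove, bipartiteBelow, filter_filter] at hswap
  simp only [zeros]
  rw [hswap, mul_sum, sum_congr rfl fun x _ ↦ card_mul_card_filter_mem_and_apply_eq_zero W x,
    ← mul_sum, sum_ite, sum_const, sum_const, smul_eq_mul, smul_eq_mul, mul_one,
    ← card_univ (α := ι), ← card_filter_add_card_filter_not (s := univ) (fun x ↦ ∀ w ∈ W, w x = 0)]
  congr 1
  obtain ⟨m, hm⟩ := Nat.exists_eq_add_of_le' (Fintype.card_pos (α := K))
  rw [hm, Nat.add_sub_cancel]
  ring

section MinDist

variable {C : Submodule K (ι → K)} {d : ℕ}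

lemma finrank_shortened_zeros (hmin : ∀ c ∈ C, c ≠ 0 → d ≤ hammingNorm c)
    {w : ι → K} (hw : w ∈ C) (hne : w ≠ 0) (hd : hammingNorm w = d) :
    finrank K (shortened C (zeros w)) = 1 := by
  obtain ⟨x, hx⟩ := Function.ne_iff.1 hne
  refine finrank_eq_one_iff'.2 ⟨⟨w, mem_shortened.2 ⟨hw, Subset.rfl⟩⟩,
    fun h ↦ hne (congrArg Subtype.val h), fun ⟨c, hc⟩ ↦ ⟨c x / w x, Subtype.ext ?_⟩⟩
  rw [mem_shortened] at hc
  set r := (c x / w x) • w - c with hr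
  have hsub : insert x (zeros w) ⊆ zeros r := insert_subset
    (by simp [hr, div_mul_cancel₀ _ (show w x ≠ 0 from hx)]) fun y hy ↦ by
      simp [hr, mem_zeros.1 hy, mem_zeros.1 (hc.2 hy)]
  have hcard := card_le_card hsub
  rw [card_insert_of_notMem (by simpa using hx)] at hcard
  have hr0 : r = 0 := by
    by_contra hne'
    have := hmin r (C.sub_mem (C.smul_mem _ hw) hc.1) hne'
    have := hammingNorm_add_card_zeros r
    have := hammingNorm_add_card_zeros w
    omega
  exact sub_eq_zero.1 hr0

lemma card_supports_mul [Fintype K] (hmin : ∀ c ∈ C, c ≠ 0 → d ≤ hammingNorm c) (hd : 0 < d)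
    (R : Finset ι → Prop) [DecidablePred R] :
    #{S ∈ supports (C : Set (ι → K)) d | R S} * (card K - 1) =
      #{w ∈ {w | w ∈ C ∧ hammingNorm w = d} | R (zeros w)ᶜ} := by
  have hmaps : ∀ w ∈ ({w ∈ {w | w ∈ C ∧ hammingNorm w = d} | R (zeros w)ᶜ} : Finset (ι → K)),
      (zeros w)ᶜ ∈ {S ∈ supports (C : Set (ι → K)) d | R S} := by
    simp only [mem_filter, mem_univ, true_and, mem_supports]
    exact fun w ⟨⟨hw, hwd⟩, hR⟩ ↦ ⟨⟨w, hw, hwd, rfl⟩, hR⟩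
  rw [card_eq_sum_card_fiberwise hmaps]
  refine (sum_const_nat fun S hS ↦ ?_).symm
  rw [mem_filter, mem_supports] at hS
  obtain ⟨⟨w, hw, hwd, rfl⟩, hR⟩ := hS
  have hne : w ≠ 0 := fun h ↦ by simp [← hwd, h] at hd
  rw [← card_filter_mem_ne_zero_of_finrank_eq_one (finrank_shortened_zeros hmin hw hne hwd)]
  congr 1
  ext c
  simp only [mem_filter, mem_univ, true_and, mem_shortened, compl_inj_iff]
  constructor
  · rintro ⟨⟨⟨hc, hcd⟩, -⟩, hzeros⟩
    exact ⟨⟨hc, hzeros.ge⟩, fun h ↦ by simp [← hcd, h] at hd⟩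
  · rintro ⟨⟨hc, hsub⟩, hc0⟩
    have hcd := hmin c hc hc0
    have := card_le_card hsub
    have hnormc := hammingNorm_add_card_zeros c
    have hnormw := hammingNorm_add_card_zeros w
    have hzeros : zeros w = zeros c := eq_of_subset_of_card_le hsub (by omega)
    exact ⟨⟨⟨hc, by rw [hzeros] at hnormw; omega⟩, hzeros ▸ hR⟩, hzeros.symm⟩

end MinDist

end Codes

section Ovoidal

variable {K V : Type*} [Field K] [AddCommGroup V] [Module K V]

/-- The word of values of the function `x ↦ a * f x + L x + c`, for coefficients `(a, L, c)`. -/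
def graphWord (f : V → K) : K × Dual K V × K →ₗ[K] (V → K) where
  toFun v x := v.1 * f x + v.2.1 x + v.2.2
  map_add' v w := by
    funext x
    simp only [Prod.fst_add, Prod.snd_add, LinearMap.add_apply, Pi.add_apply]
    ring
  map_smul' r v := by
    funext x
    simp only [Prod.smul_fst, Prod.smul_snd, LinearMap.smul_apply, Pi.smul_apply, smul_eq_mul,
      RingHom.id_apply]
    ring

lemma graphWord_apply (f : V → K) (a : K) (L : Dual K V) (c : K) (x : V) :
    graphWord f (a, L, c) x = a * f x + L x + c := rfl

/-- The code spanned by `f`, the linear forms and the constants. The zero sets of its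
words are the sections of the graph of `f` by the hyperplanes of the affine space `V × K`. -/
def graphCode (f : V → K) : Submodule K (V → K) := LinearMap.range (graphWord f)

variable [Fintype K] [Fintype V]

local instance : Fintype (Dual K V) :=
  have : Finite (Dual K V) := DFunLike.finite _
  Fintype.ofFinite _

/-- The graph of `f`, together with the point at infinity of its vertical lines, is an ovoid of
the projective space over `K` in which `V × K` is the affine part: the non-vertical plane
`y = L x + t` is tangent for `t = g L`, and meets the graph in `card K + 1` points otherwise. -/
def IsOvoidal (f : V → K) (g : Dual K V → K) : Prop :=
  ∀ L t, #{x | f x - L x = t} = if t = g L then 1 else card K + 1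

lemma card_add_two_le_card_sq (K : Type*) [Field K] [Fintype K] : card K + 2 ≤ card K ^ 2 := by
  nlinarith [Fintype.one_lt_card (α := K)]

namespace IsOvoidal

variable {f : V → K} {g : Dual K V → K} (hf : IsOvoidal f g)

include hf

lemma card_eq_sq : card V = card K ^ 2 := by
  have hsum := card_eq_sum_card_fiberwise (s := (univ : Finset V)) (t := univ)
    (f := fun x ↦ f x - (0 : Dual K V) x) (by simp)
  rw [sum_univ_eq_add_nsmul_of_eq_off (g 0) (m := card K + 1)
    fun t ht ↦ by rw [hf, if_neg ht], hf, if_pos rfl, card_univ] at hsum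
  obtain ⟨m, hm⟩ := Nat.exists_eq_add_of_le' (Fintype.card_pos (α := K))
  rw [hsum, hm, Nat.add_sub_cancel, smul_eq_mul]
  ring

lemma card_dual : card (Dual K V) = card K ^ 2 := by
  rw [← Nat.card_eq_fintype_card, natCard_dual, hf.card_eq_sq]

lemma card_zeros_graphWord {a : K} (ha : a ≠ 0) (L : Dual K V) (c : K) :
    #(zeros (graphWord f (a, L, c))) =
      if c = -a * g (-(a⁻¹ • L)) then 1 else card K + 1 := by
  have hzeros : zeros (graphWord f (a, L, c)) =
      ({x | f x - (-(a⁻¹ • L)) x = -(a⁻¹ * c)} : Finset V) := by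
    ext x
    rw [mem_zeros, mem_filter_univ, graphWord_apply, LinearMap.neg_apply, LinearMap.smul_apply,
      smul_eq_mul]
    constructor <;> intro h
    · field_simp
      linear_combination h
    · field_simp at h
      linear_combination h
  have htangent : -(a⁻¹ * c) = g (-(a⁻¹ • L)) ↔ c = -a * g (-(a⁻¹ • L)) := by
    constructor <;> intro h
    · rw [← h]
      field_simp
    · nth_rw 1 [h]
      field_simp
  rw [hzeros, hf, if_congr htangent rfl rfl]

lemma card_zeros_graphWord_of_linear {L : Dual K V} (hL : L ≠ 0) (c : K) :
    #(zeros (graphWord f (0, L, c))) = card K := by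
  rw [← pow_one (card K), ← card_filter_apply_eq_pow hf.card_eq_sq hL (-c)]
  congr 1
  ext x
  simp [graphWord_apply, add_eq_zero_iff_eq_neg]

lemma card_zeros_graphWord_le {v : K × Dual K V × K} (hv : v ≠ 0) :
    #(zeros (graphWord f v)) ≤ card K + 1 := by
  obtain ⟨a, L, c⟩ := v
  by_cases ha : a = 0
  · subst ha
    by_cases hL : L = 0
    · subst hL
      have hc : c ≠ 0 := fun h ↦ hv (by rw [h]; rfl)
      simp [zeros, graphWord_apply, hc]
    · exact (hf.card_zeros_graphWord_of_linear hL c).trans_le (Nat.le_succ _)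
  · rw [hf.card_zeros_graphWord ha]
    split_ifs <;> omega

lemma graphWord_injective : Function.Injective (graphWord f) := by
  refine (injective_iff_map_eq_zero _).2 fun v hv ↦ ?_
  by_contra hne
  have hle := hf.card_zeros_graphWord_le hne
  have hcard : #(zeros (0 : V → K)) = card K ^ 2 := by simp [zeros, hf.card_eq_sq]
  rw [hv, hcard] at hle
  nlinarith [Fintype.one_lt_card (α := K)]

lemma sum_graphCode {M : Type*} [AddCommMonoid M] (F : (V → K) → M) :
    ∑ w with w ∈ graphCode f, F w = ∑ v, F (graphWord f v) := by
  rw [← sum_image hf.graphWord_injective.injOn]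
  congr 1
  ext w
  simp [graphCode]

lemma finrank_graphCode : finrank K (graphCode f) = 4 := by
  have hV : finrank K V = 2 := Nat.pow_right_injective (Fintype.one_lt_card (α := K))
    (Module.card_eq_pow_finrank.symm.trans hf.card_eq_sq)
  have := Module.Finite.of_finite (R := K) (M := V)
  rw [graphCode, LinearMap.finrank_range_of_inj hf.graphWord_injective, finrank_prod,
    finrank_prod, Subspace.dual_finrank_eq, hV, finrank_self]

lemma sum_card_zeros_graphCode {M : Type*} [AddCommMonoid M] (F : ℕ → M) :
    ∑ w with w ∈ graphCode f, F #(zeros w) =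
      F (card K ^ 2) + (card K ^ 2 * (card K - 1) ^ 2) • F (card K + 1)
        + (card K * (card K ^ 2 - 1)) • F (card K) + (card K ^ 2 * (card K - 1)) • F 1
        + (card K - 1) • F 0 := by
  have hconst : ∑ c, F #(zeros (graphWord f (0, 0, c))) =
      F (card K ^ 2) + (card K - 1) • F 0 := by
    rw [sum_univ_eq_add_nsmul_of_eq_off 0 (m := F 0)]
    · simp [zeros, graphWord_apply, hf.card_eq_sq]
    · intro c hc
      simp [zeros, graphWord_apply, hc]
  have hlin : ∑ L, ∑ c, F #(zeros (graphWord f (0, L, c))) =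
      F (card K ^ 2) + (card K - 1) • F 0 + (card K ^ 2 - 1) • card K • F (card K) := by
    rw [sum_univ_eq_add_nsmul_of_eq_off 0 (m := card K • F (card K)), hconst, hf.card_dual]
    intro L hL
    rw [Fintype.sum_congr _ _ fun c ↦ congrArg F (hf.card_zeros_graphWord_of_linear hL c),
      sum_const, card_univ]
  have hgraph : ∀ a, a ≠ 0 → ∑ L, ∑ c, F #(zeros (graphWord f (a, L, c))) =
      card K ^ 2 • (F 1 + (card K - 1) • F (card K + 1)) := by
    intro a ha
    rw [← hf.card_dual, ← card_univ]
    refine sum_eq_card_nsmul fun L _ ↦ ?_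
    rw [sum_univ_eq_add_nsmul_of_eq_off (-a * g (-(a⁻¹ • L))) (m := F (card K + 1)),
      hf.card_zeros_graphWord ha, if_pos rfl]
    intro c hc
    rw [hf.card_zeros_graphWord ha, if_neg hc]
  rw [hf.sum_graphCode fun w ↦ F #(zeros w), Fintype.sum_prod_type]
  simp only [Fintype.sum_prod_type]
  rw [sum_univ_eq_add_nsmul_of_eq_off 0 hgraph, hlin]
  simp only [smul_add, smul_smul]
  rw [show (card K - 1) * (card K ^ 2 * (card K - 1)) = card K ^ 2 * (card K - 1) ^ 2 by ring,
    mul_comm (card K - 1) (card K ^ 2), mul_comm (card K ^ 2 - 1)]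
  abel

lemma card_slice {i j : V} (hij : i ≠ j) (a : K) :
    #{v : Dual K V × K | graphWord f (a, v) i = 0 ∧ graphWord f (a, v) j = 0} = card K := by
  have hne : Dual.eval K V (i - j) ≠ 0 := fun h ↦
    hij (sub_eq_zero.1 ((Module.eval_apply_eq_zero_iff K _).1 h))
  rw [← pow_one (card K), ← card_filter_apply_eq_pow hf.card_dual hne (a * (f j - f i))]
  have hmem : ∀ L, L ∈ ({L | Dual.eval K V (i - j) L = a * (f j - f i)} : Finset (Dual K V)) ↔
      L i - L j = a * (f j - f i) := fun L ↦ by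
    rw [mem_filter_univ, Dual.eval_apply, map_sub]
  refine card_nbij' Prod.fst (fun L ↦ (L, -(a * f i + L i))) ?_ ?_ ?_ ?_
  · rintro ⟨L, c⟩ h
    rw [mem_coe, mem_filter_univ, graphWord_apply, graphWord_apply] at h
    rw [mem_coe, hmem]
    linear_combination h.1 - h.2
  · intro L h
    rw [mem_coe, hmem] at h
    rw [mem_coe, mem_filter_univ, graphWord_apply, graphWord_apply]
    constructor
    · ring
    · linear_combination -h
  · rintro ⟨L, c⟩ h
    rw [mem_coe, mem_filter_univ, graphWord_apply] at h
    exact Prod.ext rfl (by linear_combination -h.1)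
  · exact fun L _ ↦ rfl

lemma sum_card_zeros_shortened {M : Type*} [AddCommMonoid M] (F : ℕ → M) {i j : V} (hij : i ≠ j) :
    ∑ w with w ∈ shortened (graphCode f) {i, j}, F #(zeros w) =
      F (card K ^ 2) + (card K - 1) • F (card K)
        + (card K * (card K - 1)) • F (card K + 1) := by
  have hlin : ∑ v with graphWord f (0, v) i = 0 ∧ graphWord f (0, v) j = 0,
      F #(zeros (graphWord f (0, v))) = F (card K ^ 2) + (card K - 1) • F (card K) := by
    have hzero : graphWord f (0, 0) = 0 := map_zero _
    have hmem : 0 ∈ ({v | graphWord f (0, v) i = 0 ∧ graphWord f (0, v) j = 0} :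
        Finset (Dual K V × K)) := by simp [hzero]
    rw [sum_eq_add_nsmul_of_eq_off hmem (m := F (card K)), hf.card_slice hij]
    · simp [hzero, zeros, hf.card_eq_sq]
    · rintro ⟨L, c⟩ h hne
      rw [mem_filter_univ, graphWord_apply, zero_mul, zero_add] at h
      have hL : L ≠ 0 := by
        rintro rfl
        exact hne (by simpa using h.1)
      rw [hf.card_zeros_graphWord_of_linear hL]
  have hgraph : ∀ a, a ≠ 0 → ∑ v with graphWord f (a, v) i = 0 ∧ graphWord f (a, v) j = 0,
      F #(zeros (graphWord f (a, v))) = card K • F (card K + 1) := by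
    intro a ha
    refine (sum_eq_card_nsmul fun ⟨L, c⟩ h ↦ ?_).trans (by rw [hf.card_slice hij])
    have hle : #{i, j} ≤ #(zeros (graphWord f (a, L, c))) := card_le_card (by
      simpa [insert_subset_iff] using h)
    rw [card_pair hij, hf.card_zeros_graphWord ha] at hle
    rw [hf.card_zeros_graphWord ha]
    congr 1
    split_ifs at hle ⊢ <;> omega
  simp only [mem_shortened]
  rw [← filter_filter, sum_filter, hf.sum_graphCode, Fintype.sum_prod_type]
  simp only [← sum_filter, insert_subset_iff, singleton_subset_iff, mem_zeros]
  rw [sum_univ_eq_add_nsmul_of_eq_off 0 hgraph, hlin, smul_smul, mul_comm (card K - 1)]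

lemma sum_card_zeros_shortened_ne_zero {M : Type*} [AddCancelCommMonoid M] (F : ℕ → M) {i j : V}
    (hij : i ≠ j) :
    ∑ w with w ∈ shortened (graphCode f) {i, j} ∧ w ≠ 0, F #(zeros w) =
      (card K - 1) • F (card K) + (card K * (card K - 1)) • F (card K + 1) := by
  have herase : ({w | w ∈ shortened (graphCode f) {i, j} ∧ w ≠ 0} : Finset (V → K)) =
      ({w | w ∈ shortened (graphCode f) {i, j}} : Finset (V → K)).erase 0 := by
    ext w
    rw [mem_erase, mem_filter_univ, mem_filter_univ, and_comm]
  have hzero : (0 : V → K) ∈ ({w | w ∈ shortened (graphCode f) {i, j}} : Finset (V → K)) := by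
    simp
  have hcard : #(zeros (0 : V → K)) = card K ^ 2 := by simp [zeros, hf.card_eq_sq]
  have hsum := hf.sum_card_zeros_shortened F hij
  rw [← add_sum_erase _ _ hzero, hcard, add_assoc, ← herase] at hsum
  exact add_left_cancel hsum

lemma exists_mem_shortened_ne_zero {T : Finset V} (hT : #T = 2) {k : V} (hk : k ∉ T) :
    ∃ w ∈ shortened (graphCode f) T, w k ≠ 0 := by
  obtain ⟨i, j, hij, rfl⟩ := card_eq_two.1 hT
  set W := shortened (graphCode f) {i, j}
  by_contra! hvanish
  obtain ⟨m, hm⟩ := Nat.exists_eq_add_of_le' (Fintype.card_pos (α := K))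
  have hcard : #{w | w ∈ W} = card K ^ 2 := by
    rw [card_eq_sum_ones, hf.sum_card_zeros_shortened (fun _ ↦ 1) hij, hm, Nat.add_sub_cancel]
    simp only [smul_eq_mul]
    ring
  have hzeros := sum_card_zeros W
  rw [hf.sum_card_zeros_shortened (fun z ↦ z) hij, hcard, hf.card_eq_sq] at hzeros
  have hle : #(insert k {i, j}) ≤ #{x | ∀ w ∈ W, w x = 0} := card_le_card fun x hx ↦ by
    rw [mem_filter_univ]
    intro w hw
    rcases mem_insert.1 hx with rfl | hx
    · exact hvanish w hw
    · exact mem_zeros.1 ((mem_shortened.1 hw).2 hx)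
  rw [card_insert_of_notMem hk, hT] at hle
  have hq := Fintype.one_lt_card (α := K)
  simp only [hm, Nat.add_sub_cancel, smul_eq_mul] at hzeros hq
  have hfix : (m + 1) ^ 2 * ((m + 1) ^ 2 + m * 2) =
      (m + 1) ^ 2 * ((m + 1) ^ 2 + m * #{x | ∀ w ∈ W, w x = 0}) := by
    rw [← hzeros]
    ring
  have htwo := Nat.eq_of_mul_eq_mul_left (by omega)
    (Nat.add_left_cancel (Nat.eq_of_mul_eq_mul_left (by positivity) hfix))
  omega

lemma three_lt_hammingNorm_of_mem_dualCode {u : V → K}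
    (hu : u ∈ dualCode (graphCode f : Set (V → K))) (hne : u ≠ 0) : 3 < hammingNorm u := by
  refine lt_hammingNorm_of_mem_dualCode (t := 2) ?_
    (fun T k hT hk ↦ hf.exists_mem_shortened_ne_zero hT hk) hu hne
  rw [hf.card_eq_sq]
  nlinarith [Fintype.one_lt_card (α := K)]

lemma hammingNorm_eq_iff [DecidableEq K] (w : V → K) :
    hammingNorm w = card K ^ 2 - card K - 1 ↔ #(zeros w) = card K + 1 := by
  have hnorm := hammingNorm_add_card_zeros w
  rw [hf.card_eq_sq] at hnorm
  have := card_add_two_le_card_sq K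
  omega

lemma le_hammingNorm {w : V → K} (hw : w ∈ graphCode f) (hne : w ≠ 0) :
    card K ^ 2 - card K - 1 ≤ hammingNorm w := by
  obtain ⟨v, rfl⟩ := hw
  have hle := hf.card_zeros_graphWord_le (v := v) fun h ↦ hne (by rw [h, map_zero])
  have hnorm := hammingNorm_add_card_zeros (graphWord f v)
  rw [hf.card_eq_sq] at hnorm
  omega

lemma natCard_graphCode : Nat.card (graphCode f) = card K ^ 4 := by
  rw [Module.natCard_eq_pow_finrank (K := K), hf.finrank_graphCode, Nat.card_eq_fintype_card]

lemma isMinDist_graphCode :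
    IsMinDist (graphCode f : Set (V → K)) (card K ^ 2 - card K - 1) := by
  refine ⟨?_, fun w hw hne ↦ hf.le_hammingNorm hw hne⟩
  obtain ⟨c, hc⟩ := exists_ne (-1 * g (-((1 : K)⁻¹ • 0)))
  have hweight : hammingNorm (graphWord f (1, 0, c)) = card K ^ 2 - card K - 1 := by
    rw [hf.hammingNorm_eq_iff, hf.card_zeros_graphWord one_ne_zero, if_neg hc]
  refine ⟨graphWord f (1, 0, c), ⟨_, rfl⟩, ?_, hweight⟩
  rw [map_ne_zero_iff _ hf.graphWord_injective]
  exact fun h ↦ one_ne_zero (congrArg Prod.fst h)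

lemma map_hammingNorm_graphCode [DecidableEq K] :
    (({w | w ∈ graphCode f} : Finset (V → K)).val.map fun w ↦ hammingNorm w) =
      Multiset.replicate 1 0
        + Multiset.replicate (card K ^ 2 * (card K - 1) ^ 2) (card K ^ 2 - card K - 1)
        + Multiset.replicate (card K * (card K ^ 2 - 1)) (card K ^ 2 - card K)
        + Multiset.replicate (card K ^ 2 * (card K - 1)) (card K ^ 2 - 1)
        + Multiset.replicate (card K - 1) (card K ^ 2) := by
  have hsum := hf.sum_card_zeros_graphCode fun z ↦ ({card K ^ 2 - z} : Multiset ℕ)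
  rw [← Multiset.sum_map_singleton (Multiset.map _ _), Multiset.map_map]
  simp only [Function.comp_def, hammingNorm_eq_card_sub, hf.card_eq_sq]
  simpa only [sum_eq_multiset_sum, Multiset.nsmul_singleton, Nat.sub_self, Nat.sub_zero,
    Nat.sub_sub, Multiset.replicate_one] using hsum

lemma card_minWeight :
    #{w | w ∈ graphCode f ∧ hammingNorm w = card K ^ 2 - card K - 1} =
      card K ^ 2 * (card K - 1) ^ 2 := by
  have hsq := card_add_two_le_card_sq K
  have hsum := hf.sum_card_zeros_graphCode fun z ↦ if z = card K + 1 then 1 else 0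
  simp only [hf.hammingNorm_eq_iff]
  rw [← filter_filter, card_filter, hsum]
  have := Fintype.card_pos (α := K)
  simp [show card K ^ 2 ≠ card K + 1 by omega, show card K ≠ 0 by omega]

lemma card_minWeight_pair {i j : V} (hij : i ≠ j) :
    #{w ∈ {w | w ∈ graphCode f ∧ hammingNorm w = card K ^ 2 - card K - 1} |
      i ∈ zeros w ∧ j ∈ zeros w} = card K * (card K - 1) := by
  have hsq := card_add_two_le_card_sq K
  have hsum := hf.sum_card_zeros_shortened (fun z ↦ if z = card K + 1 then 1 else 0) hij
  have hmem : ∀ w, ((w ∈ graphCode f ∧ hammingNorm w = card K ^ 2 - card K - 1) ∧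
      i ∈ zeros w ∧ j ∈ zeros w) ↔
      w ∈ shortened (graphCode f) {i, j} ∧ #(zeros w) = card K + 1 := fun w ↦ by
    rw [mem_shortened, insert_subset_iff, singleton_subset_iff, hf.hammingNorm_eq_iff]
    tauto
  rw [filter_filter]
  simp only [hmem]
  rw [← filter_filter, card_filter, hsum]
  simp [show card K ^ 2 ≠ card K + 1 by omega]

lemma card_minWeight_point (i : V) :
    #{w ∈ {w | w ∈ graphCode f ∧ hammingNorm w = card K ^ 2 - card K - 1} | i ∈ zeros w} =
      (card K - 1) * (card K ^ 2 - 1) := by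
  have hpoint := card_filter_mem_mul_of_pair
    (s := {w | w ∈ graphCode f ∧ hammingNorm w = card K ^ 2 - card K - 1}) (B := zeros)
    (k := card K + 1) (fun w hw ↦ (hf.hammingNorm_eq_iff w).1 (mem_filter_univ _ |>.1 hw).2)
    (fun i j hij ↦ hf.card_minWeight_pair hij) i
  rw [hf.card_eq_sq, Nat.add_sub_cancel] at hpoint
  refine Nat.eq_of_mul_eq_mul_right Fintype.card_pos (hpoint.trans ?_)
  ring

lemma card_supports_graphCode_mul (R : Finset V → Prop) [DecidablePred R] :
    #{S ∈ supports (graphCode f : Set (V → K)) (card K ^ 2 - card K - 1) | R S} * (card K - 1) =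
      #{w ∈ {w | w ∈ graphCode f ∧ hammingNorm w = card K ^ 2 - card K - 1} | R (zeros w)ᶜ} :=
  card_supports_mul (fun _ hw hne ↦ hf.le_hammingNorm hw hne)
    (by have := card_add_two_le_card_sq K; omega) R

lemma holds2DesignCompl_graphCode :
    Holds2DesignCompl (graphCode f : Set (V → K)) (card K ^ 2 - card K - 1) (card K) := by
  refine holds2DesignCompl_iff.2 fun i j hij ↦ ?_
  have hcount := hf.card_supports_graphCode_mul fun S ↦ i ∉ S ∧ j ∉ S
  simp only [notMem_compl] at hcount
  rw [hf.card_minWeight_pair hij] at hcount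
  exact Nat.eq_of_mul_eq_mul_right (Nat.sub_pos_of_lt (Fintype.one_lt_card (α := K))) hcount

lemma holds2Design_graphCode :
    Holds2Design (graphCode f : Set (V → K)) (card K ^ 2 - card K - 1)
      ((card K - 2) * (card K ^ 2 - card K - 1)) := by
  refine holds2Design_iff.2 fun i j hij ↦ ?_
  have hcount := hf.card_supports_graphCode_mul fun S ↦ i ∈ S ∧ j ∈ S
  simp only [mem_compl] at hcount
  have hincl := card_filter_not_and_not
    ({w | w ∈ graphCode f ∧ hammingNorm w = card K ^ 2 - card K - 1} : Finset (V → K))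
    (fun w ↦ i ∈ zeros w) (fun w ↦ j ∈ zeros w)
  rw [← hcount, hf.card_minWeight_point, hf.card_minWeight_point, hf.card_minWeight,
    hf.card_minWeight_pair hij] at hincl
  generalize #{S ∈ supports (graphCode f : Set (V → K)) (card K ^ 2 - card K - 1) | i ∈ S ∧ j ∈ S}
    = N at hincl ⊢
  obtain ⟨n, hn⟩ : ∃ n, card K = n + 2 :=
    Nat.exists_eq_add_of_le' (Fintype.one_lt_card (α := K))
  have hsq : card K ^ 2 = n ^ 2 + 4 * n + 4 := by rw [hn]; ring
  rw [hsq, hn, show n ^ 2 + 4 * n + 4 - 1 = (n + 1) * (n + 3) by ring_nf; omega,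
    show n + 2 - 1 = n + 1 from rfl] at hincl
  rw [hsq, hn, Nat.add_sub_cancel,
    show n ^ 2 + 4 * n + 4 - (n + 2) - 1 = n ^ 2 + 3 * n + 1 by omega]
  refine Nat.eq_of_mul_eq_mul_right (Nat.add_one_pos n) ?_
  linear_combination hincl

lemma card_supports_dualCode_mul {i j : V} (hij : i ≠ j) :
    #{S ∈ supports (dualCode (graphCode f : Set (V → K))) 4 | i ∈ S ∧ j ∈ S} * 2 =
      (card K ^ 2 - 3) * (card K - 2) := by
  have hpair := sum_choose_card_zeros
    (fun _ hu hne ↦ hf.three_lt_hammingNorm_of_mem_dualCode hu hne) hf.finrank_graphCode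
    (card_pair hij |>.trans_le (by norm_num))
  simp only [card_pair hij, insert_subset_iff, singleton_subset_iff] at hpair
  rw [hf.sum_card_zeros_shortened_ne_zero (fun z ↦ (z - 2).choose 2) hij] at hpair
  generalize #{S ∈ supports (dualCode (graphCode f : Set (V → K))) 4 | i ∈ S ∧ j ∈ S}
    = N at hpair ⊢
  obtain ⟨n, hn⟩ : ∃ n, card K = n + 2 :=
    Nat.exists_eq_add_of_le' (Fintype.one_lt_card (α := K))
  have hchoose : (n + 1) * n = (n + 1).choose 2 * 2 := by
    simpa using Nat.add_one_mul_choose_eq n 1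
  have hpascal : (n + 1).choose 2 = n + n.choose 2 := by simpa using Nat.choose_succ_succ n 1
  rw [hn, show n + 2 - 1 = n + 1 from rfl, show n + 2 + 1 - 2 = n + 1 from rfl,
    Nat.add_sub_cancel, smul_eq_mul, smul_eq_mul] at hpair
  rw [hn, Nat.add_sub_cancel, show (n + 2) ^ 2 - 3 = n ^ 2 + 4 * n + 1 by ring_nf; omega]
  refine Nat.eq_of_mul_eq_mul_right (Nat.add_one_pos n) ?_
  linear_combination 2 * hpair.symm - 2 * (n + 1) * hpascal - (n + 1) * (n + 3) * hchoose

lemma holds2Design_dualCode :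
    Holds2Design (dualCode (graphCode f : Set (V → K))) 4
      ((card K ^ 2 - 3) * (card K - 2) / 2) :=
  holds2Design_iff.2 fun _ _ hij ↦
    (Nat.div_eq_of_eq_mul_left two_pos (hf.card_supports_dualCode_mul hij).symm).symm

lemma isMinDist_dualCode (hK : 2 < card K) :
    IsMinDist (dualCode (graphCode f : Set (V → K))) 4 := by
  refine ⟨?_, fun u hu hne ↦ hf.three_lt_hammingNorm_of_mem_dualCode hu hne⟩
  have hV : 1 < card V := by
    rw [hf.card_eq_sq]
    nlinarith
  obtain ⟨i, j, hij⟩ := Fintype.exists_pair_of_one_lt_card hV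
  have hpos : 0 < #{S ∈ supports (dualCode (graphCode f : Set (V → K))) 4 | i ∈ S ∧ j ∈ S} := by
    have hcount := hf.card_supports_dualCode_mul hij
    have : 0 < (card K ^ 2 - 3) * (card K - 2) := Nat.mul_pos
      (Nat.sub_pos_of_lt (by nlinarith)) (Nat.sub_pos_of_lt hK)
    omega
  obtain ⟨S, hS⟩ := card_pos.1 hpos
  obtain ⟨u, hu, hweight, -⟩ := mem_supports.1 (mem_filter.1 hS).1
  exact ⟨u, hu, fun h ↦ by simp [h] at hweight, hweight⟩

end IsOvoidal

end Ovoidal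

section WalshTransform

lemma sum_pow_val_eq_sum_card_mul_pow_val {n : ℕ} [NeZero n] {X R : Type*} [Fintype X] [Semiring R]
    (ζ : R) (g : X → ZMod n) : ∑ x, ζ ^ (g x).val = ∑ t, #{x | g x = t} * ζ ^ t.val := by
  rw [← sum_fiberwise (s := univ) (g := g)]
  refine sum_congr rfl fun t _ ↦ ?_
  rw [← nsmul_eq_mul]
  exact sum_eq_card_nsmul fun x hx ↦ by rw [(mem_filter.1 hx).2]

variable {p : ℕ} [hp : Fact p.Prime] {E : Type*} [Field E] [CharZero E] {ζ : E}

lemma sum_intCast_mul_pow_val_eq_zero_iff (hζ : IsPrimitiveRoot ζ p) (c : ZMod p → ℤ) :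
    ∑ t, c t * ζ ^ t.val = 0 ↔ ∀ s t, c s = c t := by
  obtain _ | n := p
  · exact absurd rfl hp.out.ne_zero
  · exact hζ.sum_eq_zero_iff_forall_eq_int hp.out c

lemma mul_card_fiber_of_sum_pow_eq {X : Type*} [Fintype X] (hζ : IsPrimitiveRoot ζ p)
    {g : X → ZMod p} {s : ZMod p} {m : ℤ} (h : ∑ x, ζ ^ (g x).val = m * ζ ^ s.val) (t : ZMod p) :
    (p : ℤ) * #{x | g x = t} = card X - m + if t = s then p * m else 0 := by
  set c : ZMod p → ℤ := fun t ↦ #{x | g x = t} - if t = s then m else 0 with hc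
  have hvanish : ∑ t, c t * ζ ^ t.val = 0 := by
    simp only [hc, Int.cast_sub, Int.cast_natCast, sub_mul, sum_sub_distrib,
      ← sum_pow_val_eq_sum_card_mul_pow_val, h, Int.cast_ite, ite_mul, Int.cast_zero, zero_mul,
      sum_ite_eq', mem_univ, if_true, sub_self]
  have hconst := (sum_intCast_mul_pow_val_eq_zero_iff hζ c).1 hvanish
  have hcard : ∑ t, #{x | g x = t} = card X :=
    (card_eq_sum_card_fiberwise (s := univ) (f := g) (by simp)).symm
  have hsum : ∑ t, c t = card X - m := by
    rw [sum_sub_distrib, sum_ite_eq', if_pos (mem_univ s), ← hcard, Nat.cast_sum]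
  rw [sum_congr rfl fun u _ ↦ hconst u t, sum_const, card_univ, ZMod.card, nsmul_eq_mul] at hsum
  rw [← hsum]
  simp only [hc]
  split_ifs <;> ring

lemma qchar_eq_quadraticChar {F : Type*} [Field F] [Fintype F] [DecidableEq F] (y : F) :
    qchar F y = quadraticChar F y := by
  rw [qchar, quadraticChar_apply, quadraticCharFun]
  congr

lemma sqrtpstar_sq (hodd : Odd p) :
    sqrtpstar p ^ 2 = ((qchar (ZMod p) (-1) : ℤ) : ℂ) * p := by
  have hchar : qchar (ZMod p) (-1) = (-1) ^ (((p - 1) / 2) ^ 2) := by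
    have hhalf : p / 2 = (p - 1) / 2 := by
      obtain ⟨k, rfl⟩ := hodd
      omega
    rw [qchar_eq_quadraticChar, quadraticChar_neg_one (by
      rw [ZMod.ringChar_zmod_n]; exact hodd.ne_two_of_dvd_nat dvd_rfl), ZMod.card,
      ZMod.χ₄_eq_neg_one_pow (Nat.odd_iff.1 hodd), hhalf, sq, pow_mul]
    obtain h | h := neg_one_pow_eq_or ℤ ((p - 1) / 2) <;> simp [h]
  rw [hchar, sqrtpstar, mul_pow, ← pow_mul, mul_comm _ 2, pow_mul, Complex.I_sq,
    ← Complex.ofReal_pow, Real.sq_sqrt (Nat.cast_nonneg p)]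
  push_cast
  rfl

/-- The identification of a finite separable field extension `L / K` with its dual space which
sends `b` to `x ↦ trace (b * x)`. -/
def traceDual (K L : Type*) [Field K] [Field L] [Algebra K L] [FiniteDimensional K L]
    [Algebra.IsSeparable K L] : L ≃ₗ[K] Dual K L :=
  (Algebra.traceForm K L).toDual (traceForm_nondegenerate K L)

lemma traceDual_apply (K : Type*) {L : Type*} [Field K] [Field L] [Algebra K L]
    [FiniteDimensional K L] [Algebra.IsSeparable K L] (b x : L) :
    traceDual K L b x = Algebra.trace K L (b * x) := rfl

variable {Fq : Type*} [Field Fq] [Fintype Fq] [Algebra (ZMod p) Fq]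

lemma rfCode_eq_graphCode (f : Fq → ZMod p) :
    rfCode p Fq f = (graphCode f : Set (Fq → ZMod p)) := by
  ext w
  constructor
  · rintro ⟨a, c, b, hw⟩
    exact ⟨(a, traceDual (ZMod p) Fq b, c), funext fun x ↦ (hw x).symm⟩
  · rintro ⟨⟨a, L, c⟩, rfl⟩
    refine ⟨a, c, (traceDual (ZMod p) Fq).symm L, fun x ↦ ?_⟩
    rw [graphWord_apply, ← traceDual_apply, LinearEquiv.apply_symm_apply]

lemma isOvoidal_of_walsh (hζ : IsPrimitiveRoot ζ p) (hcard : card Fq = p ^ 2)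
    {f fstar : Fq → ZMod p}
    (hwalsh : ∀ β, ∑ x, ζ ^ (f x - Algebra.trace (ZMod p) Fq (β * x)).val =
      -p * ζ ^ (fstar β).val) :
    IsOvoidal f fun L ↦ fstar ((traceDual (ZMod p) Fq).symm L) := by
  intro L t
  have hfibre := mul_card_fiber_of_sum_pow_eq hζ (m := -p)
    (by exact_mod_cast hwalsh ((traceDual (ZMod p) Fq).symm L)) t
  simp only [← traceDual_apply, LinearEquiv.apply_symm_apply] at hfibre
  have hp0 : (p : ℤ) ≠ 0 := by exact_mod_cast hp.out.ne_zero
  rw [hcard] at hfibre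
  rw [← Nat.cast_inj (R := ℤ), ZMod.card]
  refine mul_left_cancel₀ hp0 (Eq.trans (by congr!) (hfibre.trans ?_))
  split_ifs <;> push_cast <;> ring

lemma isOvoidal_of_isRF (hodd : Odd p) (hcard : card Fq = p ^ 2) {f fstar : Fq → ZMod p} {ε : ℤ}
    (hRF : IsRF p 2 Fq f ε fstar) (hsign : ε * qchar (ZMod p) (-1) = -1) :
    IsOvoidal f fun L ↦ fstar ((traceDual (ZMod p) Fq).symm L) := by
  refine isOvoidal_of_walsh (Complex.isPrimitiveRoot_exp p hp.out.ne_zero) hcard fun β ↦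
    (hRF.walsh β).trans ?_
  rw [sqrtpstar_sq hodd, ← mul_assoc, ← Int.cast_mul, hsign, Int.cast_neg, Int.cast_one,
    neg_one_mul]
  rfl

end WalshTransform

end OvoidalCode

open OvoidalCode in
theorem stmt16_general {K V : Type*} [Field K] [Fintype K] [DecidableEq K]
    (hK : 2 < Fintype.card K) [AddCommGroup V] [Module K V] [Fintype V] {f : V → K}
    {g : Module.Dual K V → K} (hf : IsOvoidal f g) (C : Set (V → K)) (hC : C = graphCode f) :
    Fintype.card V = Fintype.card K ^ 2 ∧
    Nat.card C = Fintype.card K ^ 4 ∧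
    IsMinDist C (Fintype.card K ^ 2 - Fintype.card K - 1) ∧
    (C.toFinset.val.map fun c ↦ hammingNorm c)
      = Multiset.replicate 1 0
        + Multiset.replicate (Fintype.card K ^ 2 * (Fintype.card K - 1) ^ 2)
            (Fintype.card K ^ 2 - Fintype.card K - 1)
        + Multiset.replicate (Fintype.card K * (Fintype.card K ^ 2 - 1))
            (Fintype.card K ^ 2 - Fintype.card K)
        + Multiset.replicate (Fintype.card K ^ 2 * (Fintype.card K - 1)) (Fintype.card K ^ 2 - 1)
        + Multiset.replicate (Fintype.card K - 1) (Fintype.card K ^ 2) ∧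
    Nat.card (dualCode C) = Fintype.card K ^ (Fintype.card K ^ 2 - 4) ∧
    IsMinDist (dualCode C) 4 ∧
    Holds2Design C (Fintype.card K ^ 2 - Fintype.card K - 1)
      ((Fintype.card K - 2) * (Fintype.card K ^ 2 - Fintype.card K - 1)) ∧
    Holds2DesignCompl C (Fintype.card K ^ 2 - Fintype.card K - 1) (Fintype.card K) ∧
    Holds2Design (dualCode C) 4
      ((Fintype.card K ^ 2 - 3) * (Fintype.card K - 2) / 2) := by
  subst hC
  refine ⟨hf.card_eq_sq, hf.natCard_graphCode, hf.isMinDist_graphCode, ?_, ?_,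
    hf.isMinDist_dualCode hK, hf.holds2Design_graphCode, hf.holds2DesignCompl_graphCode,
    hf.holds2Design_dualCode⟩
  · rw [← hf.map_hammingNorm_graphCode]
    congr 2
    ext w
    simp
  · rw [natCard_dualCode, hf.finrank_graphCode, hf.card_eq_sq, Nat.card_eq_fintype_card]

theorem stmt16 (p : ℕ) [Fact p.Prime] (hodd : Odd p)
    (Fq : Type) [Field Fq] [Fintype Fq] [Algebra (ZMod p) Fq]
    (hcq : Fintype.card Fq = p ^ 2)
    (f : Fq → ZMod p) (ε : ℤ) (fstar : Fq → ZMod p) (hRF : IsRF p 2 Fq f ε fstar)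
    (hsign : ε * qchar (ZMod p) (-1) = -1)
    (C : Set (Fq → ZMod p)) (hC : C = rfCode p Fq f) :
    -- `C` is a `[p², 4, p² - p - 1]` code
    Fintype.card Fq = p ^ 2 ∧
    Nat.card C = p ^ 4 ∧
    IsMinDist C (p ^ 2 - p - 1) ∧
    -- weight enumerator
    (C.toFinset.val.map fun c => hammingNorm c)
      = Multiset.replicate 1 0
        + Multiset.replicate (p ^ 2 * (p - 1) ^ 2) (p ^ 2 - p - 1)
        + Multiset.replicate (p * (p ^ 2 - 1)) (p ^ 2 - p)
        + Multiset.replicate (p ^ 2 * (p - 1)) (p ^ 2 - 1)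
        + Multiset.replicate (p - 1) (p ^ 2) ∧
    -- the dual code is a `[p², p² - 4, 4]` code
    Nat.card (dualCode C) = p ^ (p ^ 2 - 4) ∧
    IsMinDist (dualCode C) 4 ∧
    -- 2-designs
    Holds2Design C (p ^ 2 - p - 1) ((p - 2) * (p ^ 2 - p - 1)) ∧
    Holds2DesignCompl C (p ^ 2 - p - 1) p ∧
    Holds2Design (dualCode C) 4 ((p ^ 2 - 3) * (p - 2) / 2) := by
  have hp : 2 < p := (Fact.out : p.Prime).two_le.lt_of_ne' (hodd.ne_two_of_dvd_nat dvd_rfl)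
  simpa only [ZMod.card] using stmt16_general (by rwa [ZMod.card])
    (OvoidalCode.isOvoidal_of_isRF hodd hcq hRF hsign) C
    (hC.trans (OvoidalCode.rfCode_eq_graphCode f))
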